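/- Suppose along a curve γ the variable τ is monotone decreasing and bounded in absolute value by T₀ > 0, the curve decomposes into finitely many segments on each of which τ has the explicit form τ(s) = √σcos(s − s₀) for some σ ≥ 0 in a fixed finite set Λ of size C₁, with s restricted to a subinterval of (s₀, s₀+π) when σ > 0 and with zero-length projection when σ = 0. Then the total arclength of γ is at most C₁π. -/

import Mathlib

open Real Set Finset

/-!
On the segments of a fixed energy `c > 0` the function `τ` runs along one branch of `√c cos`, which
is strictly decreasing on `[0, π]`. Since `τ` never increases from one such segment to the next, the
shifted segments `[a j - s₀ j, b j - s₀ j]` lie in `[0, π]` one after the other, so their lengths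
sum to at most `π`, however the segments of other energies are interleaved.
-/

theorem sum_sub_le_sub_of_forall_lt_le {ι G : Type*} [LinearOrder ι] [AddCommGroup G]
    [PartialOrder G] [IsOrderedAddMonoid G] (S : Finset ι) {u v : ι → G} {p q : G} (hpq : p ≤ q)
    (hu : ∀ i ∈ S, p ≤ u i) (hv : ∀ i ∈ S, v i ≤ q)
    (hvu : ∀ i ∈ S, ∀ j ∈ S, i < j → v i ≤ u j) :
    ∑ i ∈ S, (v i - u i) ≤ q - p := by
  induction S using Finset.induction_on_max generalizing q with
  | empty => simpa using hpq
  | insert m S hm ih =>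
    simp only [Finset.forall_mem_insert] at hu hv hvu
    have sum_before_last : ∑ i ∈ S, (v i - u i) ≤ u m - p :=
      ih hu.1 hu.2 (fun i hi => (hvu.2 i hi).1 (hm i hi)) fun i hi => (hvu.2 i hi).2
    calc ∑ i ∈ insert m S, (v i - u i)
        = (v m - u m) + ∑ i ∈ S, (v i - u i) :=
          Finset.sum_insert fun hmem => lt_irrefl m (hm m hmem)
      _ ≤ (q - u m) + (u m - p) := add_le_add (sub_le_sub_right hv.1 _) sum_before_last
      _ = q - p := sub_add_sub_cancel _ _ _

theorem sum_sub_le_sub_of_strictAntiOn {ι G β : Type*} [LinearOrder ι] [AddCommGroup G]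
    [LinearOrder G] [IsOrderedAddMonoid G] [Preorder β] (S : Finset ι) {f : G → β} {u v : ι → G}
    {p q : G} (hpq : p ≤ q) (hf : StrictAntiOn f (Set.Icc p q))
    (hu : ∀ i ∈ S, u i ∈ Set.Icc p q) (hv : ∀ i ∈ S, v i ∈ Set.Icc p q)
    (hfuv : ∀ i ∈ S, ∀ j ∈ S, i < j → f (u j) ≤ f (v i)) :
    ∑ i ∈ S, (v i - u i) ≤ q - p :=
  sum_sub_le_sub_of_forall_lt_le S hpq (fun i hi => (hu i hi).1) (fun i hi => (hv i hi).2)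
    fun i hi j hj hij => (hf.le_iff_ge (hu j hj) (hv i hi)).1 (hfuv i hi j hj hij)

theorem sum_sub_le_pi_of_mul_cos_le {ι : Type*} [LinearOrder ι] (S : Finset ι) {r : ℝ} (hr : 0 < r)
    {s₀ a b : ι → ℝ} (hseg : ∀ i ∈ S, s₀ i ≤ a i ∧ a i ≤ b i ∧ b i ≤ s₀ i + π)
    (hmono : ∀ i ∈ S, ∀ j ∈ S, i < j → r * cos (a j - s₀ j) ≤ r * cos (b i - s₀ i)) :
    ∑ i ∈ S, (b i - a i) ≤ π := by
  have strictAntiOn_mul_cos : StrictAntiOn (fun x => r * cos x) (Set.Icc 0 π) :=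
    fun _ hx _ hy hxy => mul_lt_mul_of_pos_left (strictAntiOn_cos hx hy hxy) hr
  have start_mem : ∀ i ∈ S, a i - s₀ i ∈ Set.Icc 0 π := fun i hi => by
    obtain ⟨hsa, hab, hbs⟩ := hseg i hi
    constructor <;> linarith
  have end_mem : ∀ i ∈ S, b i - s₀ i ∈ Set.Icc 0 π := fun i hi => by
    obtain ⟨hsa, hab, hbs⟩ := hseg i hi
    constructor <;> linarith
  simpa only [sub_sub_sub_cancel_right, sub_zero] using
    sum_sub_le_sub_of_strictAntiOn S pi_pos.le strictAntiOn_mul_cos start_mem end_mem hmono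

theorem stmt11_general {ι : Type*} [Fintype ι] [LinearOrder ι] (Λ : Finset ℝ)
    (σ s₀ a b : ι → ℝ) (hσΛ : ∀ j, σ j ∈ Λ) (hσnn : ∀ j, 0 ≤ σ j)
    (hseg : ∀ j, 0 < σ j → s₀ j ≤ a j ∧ a j ≤ b j ∧ b j ≤ s₀ j + π)
    (hzero : ∀ j, σ j = 0 → a j = b j)
    (hmono : ∀ i j, i < j → σ i = σ j →
      √(σ j) * cos (a j - s₀ j) ≤ √(σ i) * cos (b i - s₀ i)) :
    ∑ j, (b j - a j) ≤ #{c ∈ Λ | 0 < c} * π := by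
  have energy_pos_of_length_ne_zero : ∀ j, b j - a j ≠ 0 → 0 < σ j := fun j hne =>
    (hσnn j).lt_of_ne' fun h0 => hne (sub_eq_zero.2 (hzero j h0).symm)
  have sum_level_le_pi : ∀ c ∈ ({c ∈ Λ | 0 < c} : Finset ℝ),
      ∑ j ∈ {j | 0 < σ j} with σ j = c, (b j - a j) ≤ π := fun c hc => by
    simp only [Finset.filter_filter]
    refine sum_sub_le_pi_of_mul_cos_le _ (sqrt_pos.2 (Finset.mem_filter.1 hc).2)
      (fun i hi => hseg i (Finset.mem_filter.1 hi).2.1) fun i hi j hj hij => ?_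
    have energy_i : σ i = c := (Finset.mem_filter.1 hi).2.2
    have energy_j : σ j = c := (Finset.mem_filter.1 hj).2.2
    simpa only [energy_i, energy_j] using hmono i j hij (energy_i.trans energy_j.symm)
  calc ∑ j, (b j - a j)
      = ∑ j with 0 < σ j, (b j - a j) :=
        (Finset.sum_filter_of_ne fun j _ => energy_pos_of_length_ne_zero j).symm
    _ = ∑ c ∈ Λ with 0 < c, ∑ j ∈ {j | 0 < σ j} with σ j = c, (b j - a j) :=
        (Finset.sum_fiberwise_of_maps_to
          (fun j hj => Finset.mem_filter.2 ⟨hσΛ j, (Finset.mem_filter.1 hj).2⟩) _).symm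
    _ ≤ #{c ∈ Λ | 0 < c} • π := Finset.sum_le_card_nsmul _ _ _ sum_level_le_pi
    _ = #{c ∈ Λ | 0 < c} * π := nsmul_eq_mul _ _

/-- Arclength bound for broken bicharacteristics with kinetic energies in a finite set `Λ` of
cardinality `C₁`: the curve decomposes into segments `[a_j, b_j]` on which
`τ(s) = √σ_j cos(s − s₀_j)`, with `[a_j,b_j] ⊂ (s₀_j, s₀_j + π)` if `σ_j > 0` and zero-length
projection if `σ_j = 0`; if `τ` is monotone decreasing along the whole curve, the total
arclength is at most `C₁·π`. -/
theorem stmt11 (C₁ k : ℕ) (Λ : Finset ℝ) (hcard : Λ.card = C₁)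
    (σ s₀ a b : Fin k → ℝ) (hσΛ : ∀ j, σ j ∈ Λ) (hσnn : ∀ j, 0 ≤ σ j)
    (hseg : ∀ j, 0 < σ j → s₀ j < a j ∧ a j ≤ b j ∧ b j < s₀ j + Real.pi)
    (hzero : ∀ j, σ j = 0 → a j = b j)
    (hmono : ∀ i j : Fin k, i < j →
      Real.sqrt (σ j) * Real.cos (a j - s₀ j) ≤ Real.sqrt (σ i) * Real.cos (b i - s₀ i)) :
    ∑ j, (b j - a j) ≤ (C₁ : ℝ) * Real.pi :=
  (stmt11_general Λ σ s₀ a b hσΛ hσnn (fun j hj => (hseg j hj).imp le_of_lt (.imp_right le_of_lt))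
    hzero fun i j hij _ => hmono i j hij).trans (by rw [← hcard]; gcongr; exact filter_subset _ _)
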